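/- Let p be a prime, n ≥ 1, and suppose the function x ↦ e(|x|/p²) on F_p^n (for p = 2 use e(|x|/8)) taking values in ℂ admits a decomposition e(P(x)) = Σ_{i=1}^r c_i · e(Q_i(x)) · 1_{H_i}(x), where H_i ⊆ F_p^n are affine subspaces, Q_i : H_i → ℝ/ℤ are nonclassical polynomials of degree at most 2 on H_i, and c_i ∈ ℂ. Then r = Ω(n); more precisely there is a constant C = C(p) > 0 such that r ≥ n/C. -/

import Mathlib

open scoped BigOperators Classical

/-- Additive derivative of a map `P` in direction `h`. -/
def addDeriv {G M : Type*} [Add G] [Sub M] (h : G) (P : G → M) : G → M :=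
  fun x => P (x + h) - P x

/-- The exponential `e(t) = exp(2πit)` on `ℝ/ℤ`. -/
noncomputable def ee (t : AddCircle (1 : ℝ)) : ℂ := (AddCircle.toCircle t : ℂ)

/-- The phase of the `n`-qudit magic state: `|x|/8` for `p = 2` and `|x|/p²` for odd `p`. -/
noncomputable def magicPhase (p n : ℕ) (x : Fin n → ZMod p) : AddCircle (1 : ℝ) :=
  if p = 2 then (((∑ i, ((x i).val : ℝ)) / 8 : ℝ) : AddCircle (1 : ℝ))
  else (((∑ i, ((x i).val : ℝ)) / (p : ℝ) ^ 2 : ℝ) : AddCircle (1 : ℝ))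


namespace StabRank

abbrev T1 := AddCircle (1 : ℝ)

lemma ee_add (a b : T1) : ee (a + b) = ee a * ee b := by
  simp [ee, AddCircle.toCircle_add]

lemma ee_zero : ee 0 = 1 := by simp [ee]

lemma ee_neg (a : T1) : ee (-a) = (starRingEnd ℂ) (ee a) := by
  simp only [ee, AddCircle.toCircle_neg, Circle.coe_inv_eq_conj]

lemma norm_ee (a : T1) : ‖ee a‖ = 1 := Circle.norm_coe _

lemma ee_inj {a b : T1} (h : ee a = ee b) : a = b :=
  AddCircle.injective_toCircle one_ne_zero (Subtype.coe_injective h)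

lemma ee_nsmul (n : ℕ) (a : T1) : ee (n • a) = ee a ^ n := by
  simp [ee, AddCircle.toCircle_nsmul]

lemma ee_sum {ι : Type*} (s : Finset ι) (f : ι → T1) :
    ee (∑ i ∈ s, f i) = ∏ i ∈ s, ee (f i) := by
  induction s using Finset.induction_on with
  | empty => simp [ee_zero]
  | insert a s ha ih => rw [Finset.sum_insert ha, Finset.prod_insert ha, ee_add, ih]

section U3
variable {G : Type*} [AddCommGroup G] [Fintype G]

lemma vdc (R : G → T1) :
    ((‖∑ x, ee (R x)‖ ^ 2 : ℝ) : ℂ) = ∑ h, ∑ x, ee (addDeriv h R x) := by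
  have h1 : ((‖∑ x, ee (R x)‖ ^ 2 : ℝ) : ℂ)
      = (∑ y, ee (R y)) * (starRingEnd ℂ) (∑ x, ee (R x)) := by
    rw [Complex.mul_conj, Complex.normSq_eq_norm_sq]
  rw [h1, map_sum, Finset.sum_mul_sum, Finset.sum_comm, Finset.sum_comm (s := Finset.univ)
    (t := Finset.univ) (f := fun h x => ee (addDeriv h R x))]
  refine Finset.sum_congr rfl fun x _ => ?_
  rw [← Equiv.sum_comp (Equiv.addLeft x)]
  refine Finset.sum_congr rfl fun h _ => ?_
  simp only [addDeriv, Equiv.coe_addLeft, sub_eq_add_neg, ee_add, ee_neg]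

lemma vdc_le (R : G → T1) :
    ‖∑ x, ee (R x)‖ ^ 2 ≤ ∑ h, ‖∑ x, ee (addDeriv h R x)‖ := by
  have := vdc R
  calc ‖∑ x, ee (R x)‖ ^ 2 = ‖((‖∑ x, ee (R x)‖ ^ 2 : ℝ) : ℂ)‖ := by
        rw [Complex.norm_real, Real.norm_of_nonneg (by positivity)]
    _ ≤ _ := by rw [this]; exact norm_sum_le _ _

lemma vdc_four (R : G → T1) :
    ‖∑ x, ee (R x)‖ ^ 4 ≤ Fintype.card G * ∑ h, ‖∑ x, ee (addDeriv h R x)‖ ^ 2 := by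
  calc ‖∑ x, ee (R x)‖ ^ 4 = (‖∑ x, ee (R x)‖ ^ 2) ^ 2 := by ring
    _ ≤ (∑ h, ‖∑ x, ee (addDeriv h R x)‖) ^ 2 := by gcongr; exact vdc_le R
    _ ≤ _ := by simpa using sq_sum_le_card_mul_sum_sq (s := Finset.univ)
                  (f := fun h => ‖∑ x, ee (addDeriv h R x)‖)

lemma u3_bound (R : G → T1) :
    ‖∑ x, ee (R x)‖ ^ 8 ≤ (Fintype.card G : ℝ) ^ 4 *
      ‖∑ h₁, ∑ h₂, ∑ h₃, ∑ x, ee (addDeriv h₃ (addDeriv h₂ (addDeriv h₁ R)) x)‖ := by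
  have key : ∑ h₁, ∑ h₂, ‖∑ x, ee (addDeriv h₂ (addDeriv h₁ R) x)‖ ^ 2 ≤
      ‖∑ h₁, ∑ h₂, ∑ h₃, ∑ x, ee (addDeriv h₃ (addDeriv h₂ (addDeriv h₁ R)) x)‖ := by
    have : ((∑ h₁, ∑ h₂, ‖∑ x, ee (addDeriv h₂ (addDeriv h₁ R) x)‖ ^ 2 : ℝ) : ℂ) =
      ∑ h₁, ∑ h₂, ∑ h₃, ∑ x, ee (addDeriv h₃ (addDeriv h₂ (addDeriv h₁ R)) x) := by
      rw [Complex.ofReal_sum]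
      refine Finset.sum_congr rfl fun h₁ _ => ?_
      rw [Complex.ofReal_sum]
      refine Finset.sum_congr rfl fun h₂ _ => ?_
      exact vdc _
    rw [← this, Complex.norm_real]
    exact le_abs_self _
  set N : ℝ := (Fintype.card G : ℝ) with hN
  have hN0 : 0 ≤ N := by positivity
  calc ‖∑ x, ee (R x)‖ ^ 8 = (‖∑ x, ee (R x)‖ ^ 4) ^ 2 := by ring
    _ ≤ (N * ∑ h, ‖∑ x, ee (addDeriv h R x)‖ ^ 2) ^ 2 := by gcongr; exact vdc_four R
    _ = N ^ 2 * (∑ h, ‖∑ x, ee (addDeriv h R x)‖ ^ 2) ^ 2 := by ring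
    _ ≤ N ^ 2 * (N * ∑ h, (‖∑ x, ee (addDeriv h R x)‖ ^ 2) ^ 2) := by
        gcongr
        simpa using sq_sum_le_card_mul_sum_sq (s := Finset.univ)
                  (f := fun h => ‖∑ x, ee (addDeriv h R x)‖ ^ 2)
    _ ≤ N ^ 2 * (N * ∑ h₁, N * ∑ h₂, ‖∑ x, ee (addDeriv h₂ (addDeriv h₁ R) x)‖ ^ 2) := by
        gcongr with h₁
        rw [← pow_mul]
        exact vdc_four _
    _ = N ^ 4 * ∑ h₁, ∑ h₂, ‖∑ x, ee (addDeriv h₂ (addDeriv h₁ R) x)‖ ^ 2 := by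
        rw [← Finset.mul_sum]; ring
    _ ≤ _ := by gcongr

end U3

def Quad {G : Type*} [AddCommGroup G] (Q : G → T1) : Prop :=
  ∀ h₁ h₂ h₃ x, addDeriv h₃ (addDeriv h₂ (addDeriv h₁ Q)) x = 0

section quad
variable {G : Type*} [AddCommGroup G]

lemma Quad.add {Q R : G → T1} (hQ : Quad Q) (hR : Quad R) : Quad (fun x => Q x + R x) := by
  intro h₁ h₂ h₃ x
  have a := hQ h₁ h₂ h₃ x
  have b := hR h₁ h₂ h₃ x
  have c := congrArg₂ (· + ·) a b
  simp only [addDeriv, add_zero] at c ⊢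
  rw [← c]; abel

lemma Quad.zero : Quad (fun _ : G => (0 : T1)) := by
  intro h₁ h₂ h₃ x
  simp [addDeriv]

lemma Quad.const (a : T1) : Quad (fun _ : G => a) := by
  intro h₁ h₂ h₃ x
  simp [addDeriv]

lemma Quad.nsmul {Q : G → T1} (hQ : Quad Q) (n : ℕ) : Quad (fun x => n • Q x) := by
  induction n with
  | zero => simpa using Quad.zero
  | succ n ih => simpa [succ_nsmul] using ih.add hQ

lemma Quad.sum {ι : Type*} (s : Finset ι) {Q : ι → G → T1} (hQ : ∀ i, Quad (Q i)) :
    Quad (fun x => ∑ i ∈ s, Q i x) := by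
  induction s using Finset.induction_on with
  | empty => simpa using Quad.zero
  | insert a s ha ih => simpa [Finset.sum_insert ha] using (hQ a).add ih

lemma Quad.hom (φ : G →+ T1) : Quad (fun x => φ x) := by
  intro h₁ h₂ h₃ x
  simp [addDeriv]

/-- discrete Taylor expansion -/
lemma Quad.taylor {Q : G → T1} (hQ : Quad Q) (y : G) (t : ℕ) :
    Q (t • y) = Q 0 + t • addDeriv y Q 0 + (t.choose 2) • addDeriv y (addDeriv y Q) 0 := by
  have h2 : ∀ t : ℕ, addDeriv y (addDeriv y Q) (t • y) = addDeriv y (addDeriv y Q) 0 := by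
    intro t
    induction t with
    | zero => simp
    | succ t ih =>
      have := hQ y y y (t • y)
      rw [addDeriv, sub_eq_zero] at this
      rw [succ_nsmul, this, ih]
  have h1 : ∀ t : ℕ, addDeriv y Q (t • y) = addDeriv y Q 0 + t • addDeriv y (addDeriv y Q) 0 := by
    intro t
    induction t with
    | zero => simp
    | succ t ih =>
      have := h2 t
      rw [addDeriv, sub_eq_iff_eq_add] at this
      rw [succ_nsmul, this, ih, succ_nsmul]; abel
  induction t with
  | zero => simp
  | succ t ih =>
    have := h1 t
    rw [addDeriv, sub_eq_iff_eq_add] at this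
    rw [succ_nsmul, this, ih, Nat.choose_succ_succ' t 1, Nat.choose_one_right,
      succ_nsmul (addDeriv y Q 0), add_nsmul,
      show 1 + 1 = 2 from rfl]
    abel

lemma Quad.torsion {Q : G → T1} (hQ : Quad Q) (p : ℕ) (y : G) (hy : p • y = 0) :
    (p ^ 3) • (Q y - Q 0) = 0 := by
  set a := addDeriv y Q 0 with ha
  set b := addDeriv y (addDeriv y Q) 0 with hb
  have e1 : p • a + (p.choose 2) • b = 0 := by
    have := hQ.taylor y p
    rw [hy, add_assoc] at this
    simpa using this.symm
  have e2 : (2 * p) • a + ((2 * p).choose 2) • b = 0 := by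
    have := hQ.taylor y (2 * p)
    rw [mul_nsmul', hy, add_assoc] at this
    simpa using this.symm
  have hc : (2 * p).choose 2 = 2 * p.choose 2 + p ^ 2 := by
    rw [two_mul, Nat.add_choose_eq]
    simp [Finset.Nat.antidiagonal_succ]
    ring
  have e3 : (p ^ 2) • b = 0 := by
    rw [hc, add_nsmul, mul_nsmul', mul_nsmul', ← add_assoc, ← nsmul_add, e1] at e2
    simpa using e2
  have e4 : (p ^ 3) • a = 0 := by
    have : (p ^ 2) • (p • a + (p.choose 2) • b) = 0 := by rw [e1]; simp
    rw [nsmul_add, ← mul_nsmul', ← mul_nsmul', mul_comm (p ^ 2) (p.choose 2), mul_nsmul' b, e3] at this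
    simpa [pow_succ] using this
  have : Q y - Q 0 = a := by simp [ha, addDeriv]
  rw [this, e4]

end quad

noncomputable def ph (p : ℕ) (a : ZMod p) : T1 :=
  if p = 2 then (((a.val : ℝ) / 8 : ℝ) : T1) else (((a.val : ℝ) / (p : ℝ) ^ 2 : ℝ) : T1)

lemma coe_sum {ι : Type*} (s : Finset ι) (f : ι → ℝ) :
    ((∑ i ∈ s, f i : ℝ) : T1) = ∑ i ∈ s, ((f i : ℝ) : T1) :=
  map_sum (QuotientAddGroup.mk' (AddSubgroup.zmultiples (1 : ℝ))) f s

lemma magic_eq (p n : ℕ) (x : Fin n → ZMod p) : magicPhase p n x = ∑ i, ph p (x i) := by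
  unfold magicPhase ph
  split_ifs
  · rw [Finset.sum_div, coe_sum]
  · rw [Finset.sum_div, coe_sum]

lemma norm_sum_lt {ι : Type*} [Fintype ι] (F : ι → ℂ) (hF : ∀ i, ‖F i‖ = 1) (a b : ι)
    (hab : F a ≠ F b) : ‖∑ i, F i‖ < Fintype.card ι := by
  have hne : a ≠ b := fun h => hab (by rw [h])
  have h1 : ‖F a + F b‖ < 2 := by
    have := norm_add_lt_of_not_sameRay ((not_sameRay_iff_of_norm_eq (by rw [hF, hF])).2 hab)
    rw [hF, hF] at this; linarith
  have hb : b ∈ Finset.univ.erase a := by simp [hne.symm]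
  rw [← Finset.add_sum_erase _ _ (Finset.mem_univ a), ← Finset.add_sum_erase _ _ hb, ← add_assoc]
  have h2 : ‖∑ i ∈ (Finset.univ.erase a).erase b, F i‖ ≤ ((Finset.univ.erase a).erase b).card := by
    refine (norm_sum_le _ _).trans ?_
    simp [hF]
  have h3 : ((Finset.univ.erase a).erase b).card + 2 = Fintype.card ι := by
    have h4 := Finset.card_erase_add_one hb
    have h5 := Finset.card_erase_add_one (Finset.mem_univ a)
    rw [Finset.card_univ] at h5
    omega
  have h6 : ((((Finset.univ.erase a).erase b).card : ℝ)) + 2 = Fintype.card ι := by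
    exact_mod_cast h3
  have := norm_add_le (F a + F b) (∑ i ∈ (Finset.univ.erase a).erase b, F i)
  linarith

noncomputable def D3 (p : ℕ) (a b c d : ZMod p) : T1 :=
  addDeriv c (addDeriv b (addDeriv a (ph p))) d

lemma D3_zero (p : ℕ) : D3 p 0 0 0 0 = 0 := by simp [D3, addDeriv]

lemma D3_ne (p : ℕ) (hp : p.Prime) : D3 p 1 1 1 (-2) ≠ 0 := by
  have hp2 := hp.two_le
  have : Fact p.Prime := ⟨hp⟩
  have : Fact (1 < p) := ⟨hp.one_lt⟩
  have e : D3 p 1 1 1 (-2) = ph p 1 - ph p 0 - (ph p 0 - ph p (-1))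
      - ((ph p 0 - ph p (-1)) - (ph p (-1) - ph p (-2))) := by
    simp only [D3, addDeriv]
    have a1 : (-2 : ZMod p) + 1 = -1 := by ring
    have a2 : (-1 : ZMod p) + 1 = 0 := by ring
    have a3 : (0 : ZMod p) + 1 = 1 := by ring
    rw [a1, a2, a3]
  have v1 : ((1 : ZMod p).val : ℝ) = 1 := by rw [ZMod.val_one]; simp
  have v0 : ((0 : ZMod p).val : ℝ) = 0 := by rw [ZMod.val_zero]; simp
  have vm1 : (((-1 : ZMod p)).val : ℝ) = p - 1 := by
    have : (-1 : ZMod p) = ((p - 1 : ℕ) : ZMod p) := by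
      rw [Nat.cast_sub (by omega)]; simp
    rw [this, ZMod.val_natCast_of_lt (by omega), Nat.cast_sub (by omega)]; simp
  have vm2 : (((-2 : ZMod p)).val : ℝ) = p - 2 := by
    have : (-2 : ZMod p) = ((p - 2 : ℕ) : ZMod p) := by
      rw [Nat.cast_sub (by omega)]; simp
    rw [this, ZMod.val_natCast_of_lt (by omega), Nat.cast_sub (by omega)]; simp
  have hp0 : (p : ℝ) ≠ 0 := by exact_mod_cast hp.ne_zero
  rw [e]
  unfold ph
  rw [v1, v0, vm1, vm2]
  split_ifs with h
  · simp only [← AddCircle.coe_sub]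
    rw [Ne, AddCircle.coe_eq_zero_iff]
    rintro ⟨k, hk⟩
    subst h
    norm_num at hk
    have : ((2 * k : ℤ) : ℝ) = (1 : ℤ) := by push_cast; linarith
    have := Int.cast_injective this
    omega
  · simp only [← AddCircle.coe_sub]
    rw [Ne, AddCircle.coe_eq_zero_iff]
    rintro ⟨k, hk⟩
    field_simp at hk
    simp at hk
    have h1 : (p : ℝ) * (k * p) = p * 2 := by nlinarith
    have h2 := mul_left_cancel₀ hp0 h1
    have h3 : ((k * p : ℤ) : ℝ) = (2 : ℤ) := by push_cast; linarith
    have h4 := Int.cast_injective h3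
    have h5 : (p : ℤ) ∣ 2 := ⟨k, by rw [← h4]; ring⟩
    have h6 : p ∣ 2 := by exact_mod_cast h5
    exact h ((Nat.prime_dvd_prime_iff_eq hp Nat.prime_two).1 h6)

section
variable (p : ℕ) [NeZero p]

noncomputable def TT : ℂ := ∑ a : ZMod p, ∑ b : ZMod p, ∑ c : ZMod p, ∑ d : ZMod p, ee (D3 p a b c d)

lemma TT_lt (hp : p.Prime) : ‖TT p‖ < (p : ℝ) ^ 4 := by
  have := norm_sum_lt (fun q : ZMod p × ZMod p × ZMod p × ZMod p => ee (D3 p q.1 q.2.1 q.2.2.1 q.2.2.2))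
    (fun _ => norm_ee _) (0, 0, 0, 0) (1, 1, 1, -2) (by
      intro h
      have h := ee_inj h
      simp only [D3_zero] at h
      exact D3_ne p hp h.symm)
  simp only [Fintype.sum_prod_type] at this
  unfold TT
  refine this.trans_eq ?_
  simp [Fintype.card_prod, ZMod.card]
  ring

lemma sum_prod_fun {A : Type*} [Fintype A] (n : ℕ) (f : Fin n → A → ℂ) :
    ∑ x : Fin n → A, ∏ i, f i (x i) = ∏ i, ∑ a, f i a := by
  rw [Finset.prod_univ_sum, Fintype.piFinset_univ]

lemma magic_D3 (n : ℕ) (h₁ h₂ h₃ x : Fin n → ZMod p) :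
    addDeriv h₃ (addDeriv h₂ (addDeriv h₁ (magicPhase p n))) x
      = ∑ i, D3 p (h₁ i) (h₂ i) (h₃ i) (x i) := by
  simp only [addDeriv, magic_eq, D3, Pi.add_apply, Finset.sum_sub_distrib]

lemma corr_bound (n : ℕ) (Q : (Fin n → ZMod p) → T1) (hQ : Quad Q) :
    ‖∑ x, ee (magicPhase p n x + Q x)‖ ^ 8 ≤ ((p : ℝ) ^ 4 * ‖TT p‖) ^ n := by
  refine (u3_bound _).trans_eq ?_
  have : ∀ h₁ h₂ h₃ x : Fin n → ZMod p,
      ee (addDeriv h₃ (addDeriv h₂ (addDeriv h₁ (fun x => magicPhase p n x + Q x))) x)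
      = ∏ i, ee (D3 p (h₁ i) (h₂ i) (h₃ i) (x i)) := by
    intro h₁ h₂ h₃ x
    rw [← ee_sum, ← magic_D3]
    congr 1
    have := hQ h₁ h₂ h₃ x
    simp only [addDeriv] at this ⊢
    rw [← add_zero (magicPhase p n (x + h₃ + h₂ + h₁) - _ - _ - _), ← this]
    abel
  simp only [this]
  have s1 : ∀ h₁ h₂ h₃ : Fin n → ZMod p, ∑ x : Fin n → ZMod p,
      ∏ i, ee (D3 p (h₁ i) (h₂ i) (h₃ i) (x i)) = ∏ i, ∑ d, ee (D3 p (h₁ i) (h₂ i) (h₃ i) d) :=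
    fun h₁ h₂ h₃ => sum_prod_fun n (fun i d => ee (D3 p (h₁ i) (h₂ i) (h₃ i) d))
  simp only [s1]
  have s2 : ∀ h₁ h₂ : Fin n → ZMod p, ∑ h₃ : Fin n → ZMod p,
      ∏ i, ∑ d, ee (D3 p (h₁ i) (h₂ i) (h₃ i) d) = ∏ i, ∑ c, ∑ d, ee (D3 p (h₁ i) (h₂ i) c d) :=
    fun h₁ h₂ => sum_prod_fun n (fun i c => ∑ d, ee (D3 p (h₁ i) (h₂ i) c d))
  simp only [s2]
  have s3 : ∀ h₁ : Fin n → ZMod p, ∑ h₂ : Fin n → ZMod p,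
      ∏ i, ∑ c, ∑ d, ee (D3 p (h₁ i) (h₂ i) c d) = ∏ i, ∑ b, ∑ c, ∑ d, ee (D3 p (h₁ i) b c d) :=
    fun h₁ => sum_prod_fun n (fun i b => ∑ c, ∑ d, ee (D3 p (h₁ i) b c d))
  simp only [s3]
  rw [sum_prod_fun n (fun i a => ∑ b, ∑ c, ∑ d, ee (D3 p a b c d))]
  simp only [Finset.prod_const, Finset.card_univ, Fintype.card_fin, Fintype.card_fun, ZMod.card,
    norm_pow, TT, mul_pow]
  push_cast
  rw [← pow_mul, ← pow_mul, mul_comm n 4]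

end

section main
variable {p n : ℕ} [NeZero p] [Fact p.Prime]

/-- uniform correlation bound on a set `V` -/
def Bd (f : (Fin n → ZMod p) → ℂ) (B : ℝ) (V : Set (Fin n → ZMod p)) : Prop :=
  ∀ Q : (Fin n → ZMod p) → T1, Quad Q →
    ‖∑ x, f x * ee (Q x) * (if x ∈ V then (1 : ℂ) else 0)‖ ≤ B

lemma ee_toAddCircle (a : ZMod p) : ee (ZMod.toAddCircle a) = ZMod.stdAddChar a := rfl

lemma sum_char (s : ZMod p) :
    ∑ t : ZMod p, ee (ZMod.toAddCircle (t * s)) = if s = 0 then (p : ℂ) else 0 := by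
  simp only [ee_toAddCircle]
  rw [AddChar.sum_mulShift s (ZMod.isPrimitive_stdAddChar p)]
  split_ifs <;> simp [ZMod.card]

lemma Bd.cut {f : (Fin n → ZMod p) → ℂ} {B : ℝ} {V V' : Set (Fin n → ZMod p)} (hV : Bd f B V)
    (φ : (Fin n → ZMod p) →ₗ[ZMod p] ZMod p) (b : ZMod p)
    (hV' : ∀ x, x ∈ V' ↔ x ∈ V ∧ φ x = b) : Bd f B V' := by
  intro Q hQ
  have hp0 : (0 : ℝ) < p := by exact_mod_cast (Nat.pos_of_neZero p)
  let Q' : ZMod p → (Fin n → ZMod p) → T1 := fun t x => Q x + ZMod.toAddCircle (t * (φ x - b))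
  have hQ' : ∀ t, Quad (Q' t) := by
    intro t
    have h1 := (hQ.add (Quad.hom (ZMod.toAddCircle.comp (t • φ).toAddMonoidHom))).add
      (Quad.const (ZMod.toAddCircle (-(t * b))))
    convert h1 using 2 with x
    simp only [Q', mul_sub, map_sub, map_neg, AddMonoidHom.comp_apply]
    simp [sub_eq_add_neg, add_assoc]
  have e : (p : ℂ) * ∑ x, f x * ee (Q x) * (if x ∈ V' then (1 : ℂ) else 0)
      = ∑ t : ZMod p, ∑ x, f x * ee (Q' t x) * (if x ∈ V then (1 : ℂ) else 0) := by
    rw [Finset.sum_comm, Finset.mul_sum]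
    refine Finset.sum_congr rfl fun x _ => ?_
    have h2 : ∀ t, f x * ee (Q' t x) * (if x ∈ V then (1 : ℂ) else 0)
      = f x * ee (Q x) * (if x ∈ V then (1 : ℂ) else 0) * ee (ZMod.toAddCircle (t * (φ x - b))) := by
      intro t
      simp only [Q', ee_add]; ring
    simp only [h2]
    rw [← Finset.mul_sum, sum_char]
    by_cases h3 : x ∈ V <;> by_cases h4 : φ x = b <;> simp [hV', h3, h4, sub_eq_zero]
    ring
  have h5 : (p : ℝ) * ‖∑ x, f x * ee (Q x) * (if x ∈ V' then (1 : ℂ) else 0)‖ ≤ p * B := by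
    calc _ = ‖(p : ℂ) * ∑ x, f x * ee (Q x) * (if x ∈ V' then (1 : ℂ) else 0)‖ := by simp
      _ ≤ ∑ t : ZMod p, ‖∑ x, f x * ee (Q' t x) * (if x ∈ V then (1 : ℂ) else 0)‖ := by
        rw [e]; exact norm_sum_le _ _
      _ ≤ ∑ t : ZMod p, B := Finset.sum_le_sum fun t _ => hV _ (hQ' t)
      _ = p * B := by simp [ZMod.card]
  exact le_of_mul_le_mul_left h5 hp0

lemma restrict {r : ℕ} (f : (Fin n → ZMod p) → ℂ) (B : ℝ) (hB : Bd f B Set.univ)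
    (H : Fin r → AffineSubspace (ZMod p) (Fin n → ZMod p)) (s : Finset (Fin r)) :
    ∃ V : AffineSubspace (ZMod p) (Fin n → ZMod p), (∃ v, v ∈ V) ∧ Bd f B (V : Set _) ∧
      p ^ n ≤ Nat.card V * p ^ s.card ∧
      ∀ i ∈ s, V ≤ H i ∨ ∀ x ∈ V, x ∉ H i := by
  induction s using Finset.induction_on with
  | empty =>
    refine ⟨⊤, ⟨0, trivial⟩, by simpa using hB, ?_, by simp⟩
    have : Nat.card (⊤ : AffineSubspace (ZMod p) (Fin n → ZMod p)) = p ^ n := by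
      change Nat.card (Set.univ : Set (Fin n → ZMod p)) = _
      simp [Nat.card_eq_fintype_card]
    simp [this]
  | insert i s hi ih =>
    obtain ⟨V, ⟨v, hv⟩, hbd, hcard, hs⟩ := ih
    have hcard' : p ^ n ≤ Nat.card V * p ^ (insert i s).card := by
      refine hcard.trans ?_
      rw [Finset.card_insert_of_notMem hi]
      exact Nat.mul_le_mul_left _ (Nat.pow_le_pow_right (Nat.pos_of_neZero p) (Nat.le_succ _))
    by_cases h1 : V ≤ H i
    · refine ⟨V, ⟨v, hv⟩, hbd, hcard', ?_⟩
      intro j hj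
      rcases Finset.mem_insert.1 hj with rfl | hj
      · exact Or.inl h1
      · exact hs j hj
    by_cases h2 : ∀ x ∈ V, x ∉ H i
    · refine ⟨V, ⟨v, hv⟩, hbd, hcard', ?_⟩
      intro j hj
      rcases Finset.mem_insert.1 hj with rfl | hj
      · exact Or.inr h2
      · exact hs j hj
    push Not at h2
    obtain ⟨z, hzV, hzH⟩ := h2
    obtain ⟨w, hwV, hwH⟩ := SetLike.not_le_iff_exists.1 h1
    have hd : w - z ∉ (H i).direction := by
      intro hd
      apply hwH
      have := AffineSubspace.vadd_mem_of_mem_direction hd hzH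
      simpa using this
    obtain ⟨φ, hφ, hker⟩ := Submodule.exists_le_ker_of_notMem hd
    let V' := V ⊓ AffineSubspace.mk' w (LinearMap.ker φ)
    have hmem : ∀ x, x ∈ V' ↔ x ∈ V ∧ φ x = φ w := by
      intro x
      simp only [V', AffineSubspace.mem_inf_iff, AffineSubspace.mem_mk', LinearMap.mem_ker,
        vsub_eq_sub, map_sub, sub_eq_zero]
    refine ⟨V', ⟨w, (hmem w).2 ⟨hwV, rfl⟩⟩, hbd.cut φ (φ w) hmem, ?_, ?_⟩
    · rw [Finset.card_insert_of_notMem hi, pow_succ']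
      have hu : w - z ∈ V.direction := AffineSubspace.vsub_mem_direction hwV hzV
      let g : V → V' × ZMod p := fun x =>
        (⟨x.1 - ((φ x.1 - φ w) * (φ (w - z))⁻¹) • (w - z), by
          rw [hmem]
          constructor
          · have := AffineSubspace.vadd_mem_of_mem_direction
              (V.direction.smul_mem (-((φ x.1 - φ w) * (φ (w - z))⁻¹)) hu) x.2
            rw [vadd_eq_add, neg_smul, neg_add_eq_sub] at this
            exact this
          · rw [map_sub, map_smul, smul_eq_mul, mul_assoc, inv_mul_cancel₀ hφ]
            ring⟩, φ x.1)
      have hg : Function.Injective g := by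
        intro x y hxy
        have e2 : φ x.1 = φ y.1 := congrArg Prod.snd hxy
        have e1 := congrArg (fun q : V' × ZMod p => q.1.1) hxy
        simp only [g, e2] at e1
        exact Subtype.ext (sub_left_injective e1)
      have hc := Nat.card_le_card_of_injective g hg
      rw [Nat.card_prod, Nat.card_zmod] at hc
      calc p ^ n ≤ Nat.card V * p ^ s.card := hcard
        _ ≤ (Nat.card V' * p) * p ^ s.card := Nat.mul_le_mul_right _ hc
        _ = _ := by ring
    · intro j hj
      rcases Finset.mem_insert.1 hj with rfl | hj
      · right
        intro x hx hxH
        have h3 := hker (AffineSubspace.vsub_mem_direction hxH hzH)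
        rw [LinearMap.mem_ker, vsub_eq_sub, map_sub, ((hmem x).1 hx).2, ← map_sub] at h3
        exact hφ h3
      · rcases hs j hj with h | h
        · exact Or.inl (inf_le_left.trans h)
        · exact Or.inr fun x hx => h x ((hmem x).1 hx).1

lemma extend (V H : AffineSubspace (ZMod p) (Fin n → ZMod p)) (v : Fin n → ZMod p) (hv : v ∈ V)
    (hVH : V ≤ H) (Q : (Fin n → ZMod p) → T1)
    (hQ : ∀ h₁ ∈ H.direction, ∀ h₂ ∈ H.direction, ∀ h₃ ∈ H.direction,
            ∀ x ∈ H, addDeriv h₃ (addDeriv h₂ (addDeriv h₁ Q)) x = 0) :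
    ∃ Q' : (Fin n → ZMod p) → T1, Quad Q' ∧ ∀ x ∈ V, Q' x = Q x := by
  obtain ⟨g, hg⟩ := LinearMap.exists_leftInverse_of_injective V.direction.subtype
    V.direction.ker_subtype
  let P : (Fin n → ZMod p) → (Fin n → ZMod p) := fun x => v + (g (x - v) : Fin n → ZMod p)
  have hdir := AffineSubspace.direction_le hVH
  have hP : ∀ x, P x ∈ H := by
    intro x
    have := AffineSubspace.vadd_mem_of_mem_direction (g (x - v)).2 hv
    apply hVH
    simpa [P, add_comm] using this
  have hPadd : ∀ x h, P (x + h) = P x + (g h : Fin n → ZMod p) := by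
    intro x h
    simp only [P]
    rw [add_sub_right_comm, map_add, Submodule.coe_add, add_assoc]
  refine ⟨fun x => Q (P x), ?_, ?_⟩
  · intro h₁ h₂ h₃ x
    have := hQ _ (hdir (g h₁).2) _ (hdir (g h₂).2) _ (hdir (g h₃).2) _ (hP x)
    simp only [addDeriv, hPadd] at this ⊢
    exact this
  · intro x hx
    have h1 : x - v ∈ V.direction := AffineSubspace.vsub_mem_direction hx hv
    have h2 : g (x - v) = ⟨x - v, h1⟩ := LinearMap.congr_fun hg ⟨x - v, h1⟩
    simp only [P, h2, add_sub_cancel]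

lemma geom_root (N : ℕ) (z : ℂ) (hz : z ^ N = 1) :
    ∑ c : Fin N, z ^ (c : ℕ) = if z = 1 then (N : ℂ) else 0 := by
  rw [Fin.sum_univ_eq_sum_range (fun i => z ^ i)]
  split_ifs with h
  · simp [h]
  · have h1 := mul_neg_geom_sum z N
    rw [hz, sub_self] at h1
    exact (mul_eq_zero.1 h1).resolve_left (sub_ne_zero.2 (Ne.symm h))

lemma moment_id {X : Type*} [Fintype X] {r : ℕ} (N : ℕ) (q : Fin r → X → T1)
    (hq : ∀ i x, N • q i x = 0) (u : X → ℂ) :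
    ((∑ c : Fin r → Fin N, ‖∑ x, u x * ee (∑ i, (c i : ℕ) • q i x)‖ ^ 2 : ℝ) : ℂ)
      = (N : ℂ) ^ r * ∑ x, ∑ y, u x * (starRingEnd ℂ) (u y) *
        (if ∀ i, q i x = q i y then (1 : ℂ) else 0) := by
  have h0 : ∀ x y, ∑ c : Fin r → Fin N,
      ee (∑ i, (c i : ℕ) • q i x) * (starRingEnd ℂ) (ee (∑ i, (c i : ℕ) • q i y))
      = (N : ℂ) ^ r * (if ∀ i, q i x = q i y then (1 : ℂ) else 0) := by
    intro x y
    have h1 : ∀ c : Fin r → Fin N,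
      ee (∑ i, (c i : ℕ) • q i x) * (starRingEnd ℂ) (ee (∑ i, (c i : ℕ) • q i y))
      = ∏ i, ee (q i x - q i y) ^ (c i : ℕ) := by
      intro c
      rw [← ee_neg, ← ee_add, ← sub_eq_add_neg, ← Finset.sum_sub_distrib, ee_sum]
      refine Finset.prod_congr rfl fun i _ => ?_
      rw [← nsmul_sub, ee_nsmul]
    simp only [h1]
    rw [sum_prod_fun r (fun i (a : Fin N) => ee (q i x - q i y) ^ (a : ℕ))]
    have h2 : ∀ i, ∑ a : Fin N, ee (q i x - q i y) ^ (a : ℕ)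
        = if q i x = q i y then (N : ℂ) else 0 := by
      intro i
      rw [geom_root]
      · have : ee (q i x - q i y) = 1 ↔ q i x = q i y := by
          rw [← ee_zero]
          exact ⟨fun h => sub_eq_zero.1 (ee_inj h), fun h => by rw [h, sub_self]⟩
        simp only [this]
      · rw [← ee_nsmul, nsmul_sub, hq, hq, sub_zero, ee_zero]
    simp only [h2]
    split_ifs with h3
    · simp [h3]
    · push Not at h3
      obtain ⟨i, hi⟩ := h3
      rw [mul_zero]
      exact Finset.prod_eq_zero (Finset.mem_univ i) (by simp [hi])
  rw [Complex.ofReal_sum]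
  have h4 : ∀ c : Fin r → Fin N, ((‖∑ x, u x * ee (∑ i, (c i : ℕ) • q i x)‖ ^ 2 : ℝ) : ℂ)
      = ∑ x, ∑ y, u x * (starRingEnd ℂ) (u y) * (ee (∑ i, (c i : ℕ) • q i x) *
        (starRingEnd ℂ) (ee (∑ i, (c i : ℕ) • q i y))) := by
    intro c
    rw [← Complex.normSq_eq_norm_sq, ← Complex.mul_conj, map_sum, Finset.sum_mul_sum]
    refine Finset.sum_congr rfl fun x _ => Finset.sum_congr rfl fun y _ => ?_
    rw [map_mul]; ring
  simp only [h4]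
  rw [Finset.sum_comm, Finset.mul_sum]
  refine Finset.sum_congr rfl fun x _ => ?_
  rw [Finset.sum_comm, Finset.mul_sum]
  refine Finset.sum_congr rfl fun y _ => ?_
  rw [← Finset.mul_sum, h0]
  ring

/-- second moment argument -/
lemma second_moment {X : Type*} [Fintype X] {r : ℕ} (N : ℕ) [NeZero N] (q : Fin r → X → T1)
    (hq : ∀ i x, N • q i x = 0) (f : X → ℂ) (V : Set X) (B : ℝ)
    (hf1 : ∀ x, ‖f x‖ = 1)
    (hf : ∀ x ∈ V, ∀ y ∈ V, (∀ i, q i x = q i y) → f x = f y)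
    (hB : ∀ c : Fin r → Fin N,
      ‖∑ x, f x * ee (∑ i, (c i : ℕ) • q i x) * (if x ∈ V then (1 : ℂ) else 0)‖ ≤ B) :
    (Nat.card V : ℝ) ^ 2 ≤ (N : ℝ) ^ r * B ^ 2 := by
  have e1 := moment_id N q hq (fun x => if x ∈ V then (1 : ℂ) else 0)
  have e2 := moment_id N q hq (fun x => f x * if x ∈ V then (1 : ℂ) else 0)
  have e3 : ∑ c : Fin r → Fin N,
        ‖∑ x, (if x ∈ V then (1 : ℂ) else 0) * ee (∑ i, (c i : ℕ) • q i x)‖ ^ 2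
      = ∑ c : Fin r → Fin N,
        ‖∑ x, (f x * if x ∈ V then (1 : ℂ) else 0) * ee (∑ i, (c i : ℕ) • q i x)‖ ^ 2 := by
    apply Complex.ofReal_injective
    rw [e1, e2]
    congr 1
    refine Finset.sum_congr rfl fun x _ => Finset.sum_congr rfl fun y _ => ?_
    by_cases hx : x ∈ V
    · by_cases hy : y ∈ V
      · by_cases hxy : ∀ i, q i x = q i y
        · have : f y * (starRingEnd ℂ) (f y) = 1 := by
            rw [Complex.mul_conj, Complex.normSq_eq_norm_sq, hf1]; simp
          simp [hx, hy, hxy, hf x hx y hy hxy, this]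
        · simp [hxy]
      · simp [hy]
    · simp [hx]
  have e4 : (Nat.card V : ℝ) ^ 2 ≤ ∑ c : Fin r → Fin N,
        ‖∑ x, (if x ∈ V then (1 : ℂ) else 0) * ee (∑ i, (c i : ℕ) • q i x)‖ ^ 2 := by
    refine le_trans (le_of_eq ?_) (Finset.single_le_sum (f := fun c : Fin r → Fin N =>
        ‖∑ x, (if x ∈ V then (1 : ℂ) else 0) * ee (∑ i, (c i : ℕ) • q i x)‖ ^ 2)
        (fun c _ => by positivity) (Finset.mem_univ (fun _ => (0 : Fin N))))
    simp [ee_zero, Nat.card_eq_fintype_card, Fintype.card_subtype]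
  rw [e3] at e4
  refine e4.trans ?_
  calc _ ≤ ∑ c : Fin r → Fin N, B ^ 2 := by
        refine Finset.sum_le_sum fun c _ => ?_
        have := hB c
        simp only [mul_right_comm (f _) (ee _)] at this
        gcongr
    _ = _ := by simp

end main

lemma final_bound (p : ℕ) [NeZero p] (hp : p.Prime) (n r : ℕ)
    (H : Fin r → AffineSubspace (ZMod p) (Fin n → ZMod p))
    (Q : Fin r → (Fin n → ZMod p) → AddCircle (1 : ℝ))
    (c : Fin r → ℂ)
    (hQ : ∀ i, ∀ h₁ ∈ (H i).direction, ∀ h₂ ∈ (H i).direction, ∀ h₃ ∈ (H i).direction,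
            ∀ x ∈ H i, addDeriv h₃ (addDeriv h₂ (addDeriv h₁ (Q i))) x = 0)
    (hdec : ∀ x, ee (magicPhase p n x)
              = ∑ i, c i * ee (Q i x) * (if x ∈ H i then (1 : ℂ) else 0)) :
    ((p : ℝ) ^ n) ^ 8 ≤ ((p : ℝ) ^ 20) ^ r * ((p : ℝ) ^ 4 * ‖TT p‖) ^ n := by
  have : Fact p.Prime := ⟨hp⟩
  let f : (Fin n → ZMod p) → ℂ := fun x => ee (magicPhase p n x)
  set B8 : ℝ := ((p : ℝ) ^ 4 * ‖TT p‖) ^ n with hB8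
  have hB80 : 0 ≤ B8 := by positivity
  let B : ℝ := B8 ^ ((1 : ℝ) / 8)
  have hB0 : 0 ≤ B := by positivity
  have hBpow : B ^ 8 = B8 := by
    rw [← Real.rpow_natCast, ← Real.rpow_mul hB80]; norm_num
  have hbd : Bd f B Set.univ := by
    intro q hq
    have := corr_bound p n q hq
    simp only [ee_add] at this
    simp only [Set.mem_univ, if_true, mul_one]
    rw [← hB8, ← hBpow] at this
    exact le_of_pow_le_pow_left₀ (by norm_num) hB0 this
  obtain ⟨V, ⟨v, hv⟩, hVbd, hcard, hV⟩ := restrict f B hbd H Finset.univ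
  have hex : ∀ i, ∃ q : (Fin n → ZMod p) → T1, Quad q ∧ ∀ x ∈ V, V ≤ H i → q x = Q i x := by
    intro i
    by_cases h : V ≤ H i
    · obtain ⟨q, h1, h2⟩ := extend V (H i) v hv h (Q i) (hQ i)
      exact ⟨q, h1, fun x hx _ => h2 x hx⟩
    · exact ⟨_, Quad.zero, fun x _ h' => absurd h' h⟩
  choose q hq1 hq2 using hex
  have hN : NeZero (p ^ 3) := ⟨pow_ne_zero _ hp.ne_zero⟩
  have hsm := second_moment (p ^ 3) (fun i x => q i x - q i 0) (fun i x =>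
      (hq1 i).torsion p x (by ext j; simp)) f (V : Set (Fin n → ZMod p)) B
      (fun x => norm_ee _) (by
        intro x hx y hy hxy
        simp only [f, hdec]
        refine Finset.sum_congr rfl fun i _ => ?_
        rcases hV i (Finset.mem_univ i) with h | h
        · have := hxy i
          simp only [sub_left_inj] at this
          rw [hq2 i x hx h, hq2 i y hy h] at this
          rw [if_pos (h hx), if_pos (h hy), this]
        · rw [if_neg (h x hx), if_neg (h y hy)]; simp) (by
        intro k
        refine hVbd (fun x => ∑ i, (k i : ℕ) • (q i x - q i 0)) (Quad.sum _ fun i => Quad.nsmul ?_ _)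
        simpa [sub_eq_add_neg] using (hq1 i).add (Quad.const (-(q i 0))))
  have hcard' : (p : ℝ) ^ n ≤ Nat.card V * (p : ℝ) ^ r := by
    rw [Finset.card_univ, Fintype.card_fin] at hcard
    exact_mod_cast hcard
  have hsm' : (Nat.card V : ℝ) ^ 2 ≤ ((p : ℝ) ^ 3) ^ r * B ^ 2 := by
    have h := hsm
    push_cast at h
    exact h
  calc ((p : ℝ) ^ n) ^ 8 ≤ (Nat.card V * (p : ℝ) ^ r) ^ 8 := by gcongr
    _ = ((Nat.card V : ℝ) ^ 2) ^ 4 * ((p : ℝ) ^ r) ^ 8 := by ring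
    _ ≤ (((p : ℝ) ^ 3) ^ r * B ^ 2) ^ 4 * ((p : ℝ) ^ r) ^ 8 := by gcongr
    _ = ((p : ℝ) ^ 20) ^ r * B ^ 8 := by ring
    _ = _ := by rw [hBpow]

end StabRank

theorem stmt_19 (p : ℕ) [NeZero p] (hp : p.Prime) :
    ∃ C : ℝ, 0 < C ∧
      ∀ (n r : ℕ), 1 ≤ n →
        ∀ (H : Fin r → AffineSubspace (ZMod p) (Fin n → ZMod p))
          (Q : Fin r → (Fin n → ZMod p) → AddCircle (1 : ℝ))
          (c : Fin r → ℂ),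
          -- each `Q i` is a nonclassical polynomial of degree at most 2 on `H i`
          (∀ i, ∀ h₁ ∈ (H i).direction, ∀ h₂ ∈ (H i).direction, ∀ h₃ ∈ (H i).direction,
            ∀ x ∈ H i, addDeriv h₃ (addDeriv h₂ (addDeriv h₁ (Q i))) x = 0) →
          -- the decomposition of the magic-state amplitudes
          (∀ x, ee (magicPhase p n x)
              = ∑ i, c i * ee (Q i x) * (if x ∈ H i then (1 : ℂ) else 0)) →
          (n : ℝ) ≤ C * r := by

  have hT := StabRank.TT_lt p hp
  have hp1 : (1 : ℝ) < p := by exact_mod_cast hp.one_lt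
  have hp0 : (0 : ℝ) < (p : ℝ) ^ 4 := by positivity
  set τ : ℝ := max (‖StabRank.TT p‖ / (p : ℝ) ^ 4) (1 / 2) with hτ
  have hτ0 : 0 < τ := lt_of_lt_of_le (by norm_num) (le_max_right _ _)
  have hτ1 : τ < 1 := max_lt ((div_lt_one hp0).2 hT) (by norm_num)
  have hTτ : ‖StabRank.TT p‖ ≤ τ * (p : ℝ) ^ 4 := (div_le_iff₀ hp0).1 (le_max_left _ _)
  have hL : 0 < -Real.log τ := neg_pos.2 (Real.log_neg hτ0 hτ1)
  have hlp : 0 < Real.log p := Real.log_pos hp1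
  refine ⟨20 * Real.log p / (-Real.log τ), by positivity, ?_⟩
  intro n r _ H Q c hQ hdec
  have h := StabRank.final_bound p hp n r H Q c hQ hdec
  have h1 : ((p : ℝ) ^ n) ^ 8 ≤ ((p : ℝ) ^ n) ^ 8 * (((p : ℝ) ^ 20) ^ r * τ ^ n) := by
    calc ((p : ℝ) ^ n) ^ 8 ≤ ((p : ℝ) ^ 20) ^ r * ((p : ℝ) ^ 4 * ‖StabRank.TT p‖) ^ n := h
      _ ≤ ((p : ℝ) ^ 20) ^ r * ((p : ℝ) ^ 4 * (τ * (p : ℝ) ^ 4)) ^ n := by gcongr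
      _ = _ := by ring
  have h2 : (1 : ℝ) ≤ ((p : ℝ) ^ 20) ^ r * τ ^ n :=
    le_of_mul_le_mul_left (by simpa using h1) (by positivity : (0 : ℝ) < ((p : ℝ) ^ n) ^ 8)
  have h3 := Real.log_nonneg h2
  rw [Real.log_mul (by positivity) (by positivity), Real.log_pow, Real.log_pow, Real.log_pow] at h3
  rw [div_mul_eq_mul_div, le_div_iff₀ hL]
  push_cast at h3
  linarith
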